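/- Fix n ≥ 2. The subring of Γ′[x_1,…,x_n] consisting of elements fixed by the ring endomorphisms s_□, s_1, …, s_{n−1} (the W̃_n-invariants) equals the polynomial subring B^{(n)} = ℤ[ⁿb_1, …, ⁿb_{n−1}, ⁿb_n, ⁿb′_n, ⁿb_{n+1}, …]. -/

import Mathlib

/-!
STATEMENT 18: Fix `n ≥ 2`.  The subring of `Γ′[x_1, …, x_n]` of elements fixed by the ring
endomorphisms `s_□, s_1, …, s_{n−1}` (the `W̃_n`-invariants) equals the subring
`B^{(n)} = ℤ[ⁿb_1, …, ⁿb_{n−1}, ⁿb_n, ⁿb′_n, ⁿb_{n+1}, …]`.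

`Γ′` is the quotient of `ℤ[b_1, b_2, …]` by the ideal generated by
`b_p² + 2 Σ_{i=1}^{p−1} (−1)^i b_{p+i} b_{p−i} + (−1)^p b_{2p}` for `p ≥ 1`.  The
endomorphism `s_□` (uniquely determined by its stated values on generators) is quantified
as a hypothesis; `s_1, …, s_{n−1}` are renamings along adjacent transpositions.  Variables
are 0-indexed: `x_1, x_2` are `X 0, X 1`.
-/

open MvPolynomial

/-- The generator `b_p` of `ℤ[b_1, b_2, …]` (with `b_0 = 1`). -/
noncomputable def bF : ℕ → MvPolynomial ℕ ℤ := fun p =>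
  if p = 0 then 1 else X (p - 1)

/-- The defining relations of `Γ′`. -/
noncomputable def gammaPrimeRelations : Set (MvPolynomial ℕ ℤ) :=
  {q | ∃ p : ℕ, 1 ≤ p ∧
    q = bF p ^ 2 + 2 * (∑ i ∈ Finset.Icc 1 (p - 1),
      (-1 : MvPolynomial ℕ ℤ) ^ i * (bF (p + i) * bF (p - i)))
      + (-1 : MvPolynomial ℕ ℤ) ^ p * bF (2 * p)}

/-- The ring `Γ′`, isomorphic to the ring of Schur `P`-functions. -/
abbrev GammaPrime := MvPolynomial ℕ ℤ ⧸ Ideal.span gammaPrimeRelations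

/-- The image of `b_p` in `Γ′`. -/
noncomputable def bq (p : ℕ) : GammaPrime :=
  Ideal.Quotient.mk (Ideal.span gammaPrimeRelations) (bF p)

/-- `c_q = 2 b_q` for `q ≥ 1`, `c_0 = 1`, in `Γ′`. -/
noncomputable def cOf (q : ℕ) : GammaPrime :=
  if q = 0 then 1 else 2 * bq q

/-- The ring `Γ′[x_1, …, x_n]`. -/
abbrev GammaPrimeX (n : ℕ) := MvPolynomial (Fin n) GammaPrime

/-- `ⁿb_p`: equals `e_p + 2 Σ_{i=0}^{p−1} e_i b_{p−i}` for `1 ≤ p < n` and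
`Σ_{i=0}^p e_i b_{p−i}` for `p ≥ n`. -/
noncomputable def nb (n p : ℕ) : GammaPrimeX n :=
  if p < n then
    MvPolynomial.esymm (Fin n) GammaPrime p +
      2 * ∑ i ∈ Finset.range p, MvPolynomial.esymm (Fin n) GammaPrime i * C (bq (p - i))
  else
    ∑ i ∈ Finset.range (p + 1), MvPolynomial.esymm (Fin n) GammaPrime i * C (bq (p - i))

/-- `ⁿb′_n = Σ_{i=0}^{n−1} e_i b_{n−i}`. -/
noncomputable def nb' (n : ℕ) : GammaPrimeX n :=
  ∑ i ∈ Finset.range n, MvPolynomial.esymm (Fin n) GammaPrime i * C (bq (n - i))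

/-!
Write `c(t) = Σ c_q t^q`, `E(t) = ∏ (1 + x_i t)` and `ⁿc(t) = E(t) c(t) = Σ ⁿc_p t^p`, so that
`ⁿc_p = e_p + 2 Σ_{i<p} e_i b_{p-i}`. The relations of `Γ′` say that `c(t) c(-t) = 1`, and they
express every `b_{2q}` through odd-indexed generators; one checks that `Γ′` is the polynomial ring
on the odd-indexed `b_p`, in particular a domain of characteristic zero.

*The generators are invariant.* The definition of `s_□` amounts to
`s_□ c(t) = c(t) (1 + x_1 t)(1 + x_2 t) / ((1 - x_1 t)(1 - x_2 t))`, while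
`s_□ E(t) = E(t) (1 - x_1 t)(1 - x_2 t) / ((1 + x_1 t)(1 + x_2 t))`. So `ⁿc(t)` is invariant, and
so is `e_n = x_1 ⋯ x_n`. Dividing by 2 shows that all of `B = B^{(n)}` is invariant
(`IsSBox.map_of_mem`).

*An invariant `f` lies in `B` up to a power of 2.* The coefficients of `f` are polynomials in the
`b_p`, and the `c_p = 2 b_p` are polynomials in the `ⁿc_p` and `e_i`; hence some `2^N f` is a
symmetric polynomial `F(x_1, …, x_n)` with coefficients in `B` (`exists_two_pow_mul`). Conjugates of
`s_□ s_1` are the sign changes of the pairs `(x_1, x_j)`. They fix `B` and `f`, so averaging over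
them removes from `F` all monomials whose exponents do not all have the same parity
(`evB_filter_parity`), and `2^N f = g_0(x_1², …, x_n²) + e_n g_1(x_1², …, x_n²)` with `g_0`, `g_1`
symmetric over `B`. Finally `E(t) E(-t) = ⁿc(t) ⁿc(-t)` shows that the elementary symmetric
polynomials in the `x_i²` lie in `B` (`esymm_sq_mem`), whence `2^N f ∈ B` (`evB_mem_of_invariant`).

*`B` is saturated at 2.* The same identity `E(t) E(-t) = ⁿc(t) ⁿc(-t)` yields relations which
eliminate the generators of degree `2q`, `q ≥ n`, so that `B` is generated by
`ⁿc_1, …, ⁿc_{n-1}`, `e_n` and the `Σ_{i<p} e_i b_{p-i}` with `p ≥ n` not of the form `2q`, `q ≥ n`.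
Modulo 2 the relations of `Γ′` become `b_{2q} = b_q²`, and `Γ′/2` embeds into a polynomial ring with
`b_p` a power of a variable indexed by the odd part of `p`. These odd parts are distinct for the
`p` above, so the generators stay algebraically independent modulo 2 (`freeTwo_injective`).
Therefore `2f ∈ B` implies `f ∈ B` (`mem_of_two_mul_mem`), and `2^N f ∈ B` implies `f ∈ B`.
-/

/-! ### Power series and symmetric sums -/

/-- A sum of a symmetric function over the pairs with sum `2p`, folded around the middle. -/
lemma sum_antidiagonal_fold {R : Type*} [CommRing R] (h : ℕ → ℕ → R)
    (p : ℕ) (hsymm : ∀ i j, i + j = 2 * p → h i j = h j i) :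
    ∑ x ∈ Finset.HasAntidiagonal.antidiagonal (2 * p), h x.1 x.2 =
      h p p + 2 * ∑ i ∈ Finset.Icc 1 p, h (p + i) (p - i) := by
  rw [Finset.Nat.sum_antidiagonal_eq_sum_range_succ (f := h)]
  have e1 : 2 * p + 1 = (p + 1) + p := by ring
  rw [Nat.succ_eq_add_one, e1, Finset.sum_range_add, Finset.sum_range_succ]
  have hA : ∑ i ∈ Finset.range p, h i (2 * p - i) =
      ∑ i ∈ Finset.Icc 1 p, h (p + i) (p - i) := by
    rw [← Finset.sum_range_reflect]
    rw [Finset.range_eq_Ico, Finset.sum_Ico_eq_sum_range, ← Finset.Ico_add_one_right_eq_Icc,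
      Finset.sum_Ico_eq_sum_range]
    refine Finset.sum_congr (by simp) fun i hi => ?_
    simp only [Finset.mem_range] at hi
    rw [hsymm _ _ (by omega)]
    congr 1 <;> omega
  have hB : ∑ i ∈ Finset.range p, h (p + 1 + i) (2 * p - (p + 1 + i)) =
      ∑ i ∈ Finset.Icc 1 p, h (p + i) (p - i) := by
    rw [← Finset.Ico_add_one_right_eq_Icc, Finset.sum_Ico_eq_sum_range]
    refine Finset.sum_congr (by simp) fun i hi => ?_
    congr 1 <;> omega
  rw [hA, hB]
  have : 2 * p - p = p := by omega
  rw [this]; ring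

/-- The even coefficients of `F(t)F(-t)`. -/
lemma coeff_mul_rescale_neg {R : Type*} [CommRing R] (F : PowerSeries R) (p : ℕ) :
    PowerSeries.coeff (2 * p) (F * PowerSeries.rescale (-1) F) =
      (-1) ^ p * (PowerSeries.coeff p F ^ 2 + 2 * ∑ i ∈ Finset.Icc 1 p,
        (-1) ^ i * (PowerSeries.coeff (p + i) F * PowerSeries.coeff (p - i) F)) := by
  simp only [PowerSeries.coeff_mul, PowerSeries.coeff_rescale]
  rw [sum_antidiagonal_fold (fun i j => PowerSeries.coeff i F * ((-1) ^ j * PowerSeries.coeff j F))]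
  · have : ∑ i ∈ Finset.Icc 1 p, (PowerSeries.coeff (p + i) F *
        ((-1) ^ (p - i) * PowerSeries.coeff (p - i) F)) = (-1) ^ p * ∑ i ∈ Finset.Icc 1 p,
        (-1) ^ i * (PowerSeries.coeff (p + i) F * PowerSeries.coeff (p - i) F) := by
      rw [Finset.mul_sum]
      refine Finset.sum_congr rfl fun i hi => ?_
      rw [Finset.mem_Icc] at hi
      have : (-1 : R) ^ p * (-1) ^ i = (-1) ^ (p - i) := by
        obtain ⟨k, rfl⟩ := Nat.exists_eq_add_of_le hi.2
        rw [Nat.add_sub_cancel_left, pow_add, mul_right_comm, ← mul_pow]; simp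
      rw [← this]; ring
    rw [this]; ring
  · intro i j hij
    have : (-1 : R) ^ i = (-1) ^ j := by
      rw [neg_one_pow_eq_pow_mod_two, neg_one_pow_eq_pow_mod_two (n := j)]
      congr 1; omega
    rw [this]; ring

/-- The odd coefficients of `F(t)F(-t)` vanish. -/
lemma coeff_mul_rescale_neg_odd {R : Type*} [CommRing R] [IsDomain R] [CharZero R]
    (F : PowerSeries R) (p : ℕ) (hp : Odd p) :
    PowerSeries.coeff p (F * PowerSeries.rescale (-1) F) = 0 := by
  have h : PowerSeries.rescale (-1) (F * PowerSeries.rescale (-1) F) =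
      F * PowerSeries.rescale (-1) F := by
    rw [map_mul, PowerSeries.rescale_rescale]
    simp [mul_comm]
  have h2 := congrArg (PowerSeries.coeff p) h
  rw [PowerSeries.coeff_rescale, hp.neg_one_pow, neg_one_mul] at h2
  exact self_eq_neg.1 h2.symm

/-- The coefficients of `∏ (1 + y_i t^d)` are the elementary symmetric polynomials in `y`. -/
lemma coeff_prod_one_add {R S : Type*} [CommRing R] [CommRing S] [Algebra R S] {n : ℕ}
    (y : Fin n → S) (d : ℕ) (hd : 0 < d) (k : ℕ) :
    PowerSeries.coeff (d * k)
      (∏ i, (1 + PowerSeries.C (y i) * (PowerSeries.X : PowerSeries S) ^ d)) =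
      aeval y (esymm (Fin n) R k) := by
  classical
  rw [Finset.prod_one_add, map_sum, MvPolynomial.esymm, map_sum]
  simp only [Finset.prod_mul_distrib, Finset.prod_const, ← pow_mul, ← map_prod,
    PowerSeries.coeff_C_mul, PowerSeries.coeff_X_pow]
  rw [Finset.powersetCard_eq_filter, Finset.sum_filter]
  refine Finset.sum_congr rfl fun s _ => ?_
  have : d * k = d * s.card ↔ s.card = k := by
    rw [Nat.mul_right_inj hd.ne', eq_comm]
  simp [this, map_prod]

/-! ### The ring `Γ′` has no 2-torsion -/

/-- The ring `Γ′`, sealed so that instance search sees only its commutative ring structure: on the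
quotient itself the commutative semiring instance found by default is not reducibly equal to the
one underlying the commutative ring instance. -/
def GP : Type := GammaPrime

noncomputable instance : CommRing GP :=
  inferInstanceAs (CommRing (MvPolynomial ℕ ℤ ⧸ Ideal.span gammaPrimeRelations))

/-- The quotient map onto `Γ′`. -/
noncomputable def toGP : MvPolynomial ℕ ℤ →+* GP :=
  Ideal.Quotient.mk (Ideal.span gammaPrimeRelations)

/-- The image of `b_p` in `Γ′`. -/
noncomputable def bG (p : ℕ) : GP := toGP (bF p)

/-- The image of `c_p` in `Γ′`. -/
noncomputable def cG (p : ℕ) : GP := if p = 0 then 1 else 2 * bG p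

lemma toGP_surjective : Function.Surjective toGP := Ideal.Quotient.mk_surjective

/-- A homomorphism on `ℤ[b_1, b_2, …]` that respects the relations descends to `Γ′`. -/
lemma exists_lift {R : Type*} [CommRing R] (u : ℕ → R) (h0 : u 0 = 1)
    (hu : ∀ p, 1 ≤ p → u p ^ 2 + 2 * (∑ i ∈ Finset.Icc 1 (p - 1),
      (-1) ^ i * (u (p + i) * u (p - i))) + (-1) ^ p * u (2 * p) = 0) :
    ∃ φ : GP →+* R, ∀ p, φ (bG p) = u p := by
  let α : MvPolynomial ℕ ℤ →+* R := (aeval (fun i => u (i + 1)) : MvPolynomial ℕ ℤ →ₐ[ℤ] R)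
  have hα : ∀ p, α (bF p) = u p := by
    intro p
    rcases p with _ | p
    · simp [bF, h0]
    · simp [bF, α]
  refine ⟨Ideal.Quotient.lift (Ideal.span gammaPrimeRelations) α ?_, fun p => ?_⟩
  · intro a ha
    rw [← RingHom.mem_ker]
    revert a
    rw [← SetLike.le_def, Ideal.span_le]
    rintro _ ⟨p, hp, rfl⟩
    simp only [SetLike.mem_coe, RingHom.mem_ker, map_add,
      map_mul, map_pow, map_sum, hα, map_neg, map_one, map_ofNat]
    exact hu p hp
  · exact (Ideal.Quotient.lift_mk (Ideal.span gammaPrimeRelations) α _).trans (hα p)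

/-- The images of the `b_p` in the polynomial ring on the odd-indexed generators: the defining
relations determine `b_{2q}` recursively in terms of `b_r` with `r < 2q`. -/
noncomputable def bOdd (p : ℕ) : MvPolynomial ℕ ℤ :=
  if hp : p % 2 = 1 then X p else if h0 : p = 0 then 1 else
    -(-1) ^ (p / 2) * (bOdd (p / 2) ^ 2 + 2 * ∑ i : Fin (p / 2 - 1),
      (-1) ^ ((i : ℕ) + 1) * (bOdd (p / 2 + ((i : ℕ) + 1)) * bOdd (p / 2 - ((i : ℕ) + 1))))
termination_by p
decreasing_by all_goals omega

lemma sum_Icc_eq_sum_fin {R : Type*} [AddCommMonoid R] (f : ℕ → R) (m : ℕ) :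
    ∑ i ∈ Finset.Icc 1 m, f i = ∑ i : Fin m, f ((i : ℕ) + 1) := by
  rw [Fin.sum_univ_eq_sum_range (fun i => f (i + 1)), ← Finset.Ico_add_one_right_eq_Icc,
    Finset.sum_Ico_eq_sum_range]
  refine Finset.sum_congr (by simp) fun i _ => by rw [add_comm]

lemma bOdd_zero : bOdd 0 = 1 := by rw [bOdd]; simp

lemma bOdd_two_mul (q : ℕ) (hq : 1 ≤ q) : bOdd (2 * q) =
    -(-1) ^ q * (bOdd q ^ 2 + 2 * ∑ i ∈ Finset.Icc 1 (q - 1),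
      (-1) ^ i * (bOdd (q + i) * bOdd (q - i))) := by
  rw [bOdd, dif_neg (by omega), dif_neg (by omega), sum_Icc_eq_sum_fin]
  have h2 : 2 * q / 2 = q := by omega
  generalize 2 * q / 2 = r at h2
  subst h2
  rfl

lemma neg_one_pow_mul_self' {R : Type*} [CommRing R] (q : ℕ) :
    (-1 : R) ^ q * (-1) ^ q = 1 := by
  rw [← mul_pow]; simp

lemma bG_zero : bG 0 = 1 := by simp [bG, bF]

lemma bG_relation (p : ℕ) (hp : 1 ≤ p) :
    bG p ^ 2 + 2 * (∑ i ∈ Finset.Icc 1 (p - 1), (-1) ^ i * (bG (p + i) * bG (p - i)))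
      + (-1) ^ p * bG (2 * p) = 0 := by
  have h : toGP _ = 0 :=
    (Ideal.Quotient.eq_zero_iff_mem (I := Ideal.span gammaPrimeRelations)).2
      (Ideal.subset_span ⟨p, hp, rfl⟩)
  simp only [map_add, map_mul, map_pow, map_sum, map_neg, map_one, map_ofNat] at h
  exact h

/-- A subring of `Γ′` containing all `b_p` is all of `Γ′`. -/
lemma gammaPrime_induction (P : Subring GP) (h : ∀ p, 1 ≤ p → bG p ∈ P)
    (a : GP) : a ∈ P := by
  obtain ⟨a, rfl⟩ := toGP_surjective a
  induction a using MvPolynomial.induction_on with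
  | C a => simp
  | add p q hp hq => rw [map_add]; exact P.add_mem hp hq
  | mul_X p i hp =>
    rw [map_mul]
    refine P.mul_mem hp ?_
    have := h (i + 1) (by omega)
    simpa [bG, bF] using this

/-- `Γ′` embeds into the polynomial ring on the odd-indexed generators, as these generate it. -/
lemma exists_injective_toOdd : ∃ ψ : GP →+* MvPolynomial ℕ ℤ, Function.Injective ψ := by
  obtain ⟨ψ, hψ⟩ := exists_lift bOdd bOdd_zero fun p hp => by
    rw [bOdd_two_mul p hp]
    linear_combination (-(bOdd p ^ 2 + 2 * ∑ i ∈ Finset.Icc 1 (p - 1),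
      (-1) ^ i * (bOdd (p + i) * bOdd (p - i)))) * neg_one_pow_mul_self' (R := MvPolynomial ℕ ℤ) p
  refine ⟨ψ, ?_⟩
  let φ : MvPolynomial ℕ ℤ →+* GP := (aeval bG : MvPolynomial ℕ ℤ →ₐ[ℤ] GP)
  have hφ : ∀ p, φ (bOdd p) = bG p := by
    intro p
    induction p using Nat.strong_induction_on with
    | _ p ih =>
    rcases Nat.even_or_odd' p with ⟨q, rfl | rfl⟩
    · rcases Nat.eq_zero_or_pos q with rfl | hq
      · simp [bOdd_zero, bG_zero]
      · have h1 : ∑ i ∈ Finset.Icc 1 (q - 1), (-1) ^ i * (φ (bOdd (q + i)) * φ (bOdd (q - i))) =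
            ∑ i ∈ Finset.Icc 1 (q - 1), (-1) ^ i * (bG (q + i) * bG (q - i)) := by
          refine Finset.sum_congr rfl fun i hi => ?_
          rw [Finset.mem_Icc] at hi
          rw [ih _ (by omega), ih _ (by omega)]
        rw [bOdd_two_mul q hq]
        simp only [map_add, map_mul, map_pow, map_sum, map_neg, map_one, map_ofNat]
        rw [h1, ih q (by omega)]
        linear_combination (-(-1) ^ q) * bG_relation q hq +
          bG (2 * q) * neg_one_pow_mul_self' (R := GP) q
    · rw [bOdd, dif_pos (by omega)]
      simp [φ]
  have hφ' : ∀ a, φ (ψ a) = a := fun a =>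
    gammaPrime_induction ((φ.comp ψ).eqLocus (RingHom.id _))
      (fun p _ => by simp [RingHom.mem_eqLocus, hψ, hφ]) a
  exact Function.LeftInverse.injective hφ'

instance : IsDomain GP := by
  obtain ⟨ψ, hψ⟩ := exists_injective_toOdd
  exact hψ.isDomain ψ

instance : CharZero GP := by
  obtain ⟨ψ, -⟩ := exists_injective_toOdd
  refine charZero_of_injective_ringHom (f := Int.castRingHom GP) ?_
  refine Function.Injective.of_comp (f := ψ) ?_
  rw [← RingHom.coe_comp, RingHom.eq_intCast' (ψ.comp _)]
  exact Int.cast_injective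

/-! ### The generating series of the `ⁿb_p` -/

/-- The generating series `Σ c_q t^q`. -/
noncomputable def cSeries : PowerSeries GP := PowerSeries.mk cG

/-- The generating series `Σ e_p t^p = ∏ (1 + x_i t)`. -/
noncomputable def eSeries (n : ℕ) : PowerSeries (MvPolynomial (Fin n) GP) :=
  PowerSeries.mk (esymm (Fin n) GP)

/-- `Σ_{i<p} e_i b_{p-i}`, which is `ⁿb_p` for `p > n` and `ⁿb′_n` for `p = n`. -/
noncomputable def nbCore (n p : ℕ) : MvPolynomial (Fin n) GP :=
  ∑ i ∈ Finset.range p, esymm (Fin n) GP i * C (bG (p - i))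

/-- `ⁿc_p = Σ_{i≤p} e_i c_{p-i}`, the coefficients of `(Σ c_q t^q) ∏ (1 + x_i t)`. -/
noncomputable def nc (n p : ℕ) : MvPolynomial (Fin n) GP :=
  esymm (Fin n) GP p + 2 * nbCore n p

/-- The generating series `(Σ c_q t^q) ∏ (1 + x_i t)` of the `ⁿc_p`. -/
noncomputable def ncSeries (n : ℕ) : PowerSeries (MvPolynomial (Fin n) GP) :=
  eSeries n * PowerSeries.map C cSeries

lemma coeff_eSeries (n p : ℕ) :
    PowerSeries.coeff p (eSeries n) = esymm (Fin n) GP p := by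
  simp [eSeries]

lemma coeff_ncSeries (n p : ℕ) : PowerSeries.coeff p (ncSeries n) = nc n p := by
  rw [ncSeries, PowerSeries.coeff_mul,
    Finset.Nat.sum_antidiagonal_eq_sum_range_succ_mk, Finset.sum_range_succ, nc, add_comm]
  congr 1
  · simp [coeff_eSeries, cSeries, cG]
  · rw [nbCore, Finset.mul_sum]
    refine Finset.sum_congr rfl fun i hi => ?_
    rw [Finset.mem_range] at hi
    have : p - i ≠ 0 := by omega
    simp only [coeff_eSeries, cSeries, cG, this, PowerSeries.coeff_map, PowerSeries.coeff_mk,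
      if_false, map_mul, map_ofNat]
    ring

lemma esymm_eq_zero_of_lt {n p : ℕ} (h : n < p) : esymm (Fin n) GP p = 0 := by
  rw [esymm, Finset.powersetCard_eq_empty.2 (by simpa using h), Finset.sum_empty]

lemma eSeries_eq_prod (n : ℕ) :
    eSeries n = ∏ i : Fin n, (1 + PowerSeries.C (X i) * PowerSeries.X) := by
  ext1 p
  have := coeff_prod_one_add (R := GP) (X : Fin n → MvPolynomial (Fin n) GP) 1 one_pos p
  rw [one_mul, aeval_X_left_apply] at this
  simp only [pow_one] at this
  rw [this, coeff_eSeries]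

/-- In `Γ′` the series `Σ c_q t^q` is inverse to its value at `-t`. -/
lemma cSeries_mul_rescale : cSeries * PowerSeries.rescale (-1) cSeries = 1 := by
  ext p
  rcases Nat.even_or_odd' p with ⟨p, rfl | rfl⟩
  · rcases Nat.eq_zero_or_pos p with rfl | hp
    · rw [coeff_mul_rescale_neg]
      simp [cSeries, cG]
    · rw [coeff_mul_rescale_neg, PowerSeries.coeff_one, if_neg (by omega)]
      obtain ⟨p, rfl⟩ := Nat.exists_eq_add_of_le' hp
      have hrel := bG_relation (p + 1) hp
      simp only [Nat.add_sub_cancel] at hrel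
      have : ∑ i ∈ Finset.Icc 1 p, (-1) ^ i * (cG (p + 1 + i) * cG (p + 1 - i)) =
          4 * ∑ i ∈ Finset.Icc 1 p, (-1) ^ i * (bG (p + 1 + i) * bG (p + 1 - i)) := by
        rw [Finset.mul_sum]
        refine Finset.sum_congr rfl fun i hi => ?_
        rw [Finset.mem_Icc] at hi
        rw [cG, cG, if_neg (by omega), if_neg (by omega)]; ring
      simp only [cSeries, PowerSeries.coeff_mk]
      rw [Finset.sum_Icc_succ_top (by omega), this, Nat.sub_self, ← two_mul (p + 1)]
      simp only [cG, if_neg (Nat.succ_ne_zero p), if_true,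
        if_neg (show 2 * (p + 1) ≠ 0 by omega)]
      linear_combination (4 * (-1) ^ (p + 1)) * hrel
  · rw [coeff_mul_rescale_neg_odd _ _ (by simp), PowerSeries.coeff_one, if_neg (by omega)]

lemma ncSeries_mul_rescale (n : ℕ) :
    ncSeries n * PowerSeries.rescale (-1) (ncSeries n) =
      eSeries n * PowerSeries.rescale (-1) (eSeries n) := by
  have h := congrArg (PowerSeries.map (C : GP →+* MvPolynomial (Fin n) GP)) cSeries_mul_rescale
  have h2 : PowerSeries.map (C : GP →+* MvPolynomial (Fin n) GP)
      (PowerSeries.rescale (-1) cSeries) =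
      PowerSeries.rescale (-1) (PowerSeries.map C cSeries) := by
    ext1 p; simp [PowerSeries.coeff_rescale]
  rw [map_mul, h2, map_one] at h
  rw [ncSeries, map_mul]
  linear_combination (eSeries n * PowerSeries.rescale (-1) (eSeries n)) * h

/-- The relations among the `ⁿb_p` which express `ⁿb_{2p}`, `p ≥ n`, through generators of
smaller degree (the term `i = p` of the sum is `± ⁿb_{2p}`). -/
lemma nbCore_relation (n p : ℕ) (hp : n ≤ p) :
    nbCore n p * (nbCore n p + esymm (Fin n) GP p) +
      ∑ i ∈ Finset.Icc 1 p, (-1) ^ i * (nbCore n (p + i) * nc n (p - i)) = 0 := by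
  have h := congrArg (PowerSeries.coeff (2 * p)) (ncSeries_mul_rescale n)
  rw [coeff_mul_rescale_neg, coeff_mul_rescale_neg] at h
  simp only [coeff_ncSeries, coeff_eSeries] at h
  have h1 : ∑ i ∈ Finset.Icc 1 p, (-1 : MvPolynomial (Fin n) GP) ^ i *
      (esymm (Fin n) GP (p + i) * esymm (Fin n) GP (p - i)) = 0 := by
    refine Finset.sum_eq_zero fun i hi => ?_
    rw [Finset.mem_Icc] at hi
    rw [esymm_eq_zero_of_lt (by omega)]; ring
  have h2 : ∑ i ∈ Finset.Icc 1 p,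
      (-1 : MvPolynomial (Fin n) GP) ^ i * (nc n (p + i) * nc n (p - i)) =
      2 * ∑ i ∈ Finset.Icc 1 p, (-1) ^ i * (nbCore n (p + i) * nc n (p - i)) := by
    rw [Finset.mul_sum]
    refine Finset.sum_congr rfl fun i hi => ?_
    rw [Finset.mem_Icc] at hi
    rw [nc, esymm_eq_zero_of_lt (by omega)]; ring
  rw [h1, h2, nc] at h
  have h3 := mul_left_cancel₀ (pow_ne_zero p (neg_ne_zero.2 one_ne_zero)) h
  have h4 : (4 : MvPolynomial (Fin n) GP) ≠ 0 := by norm_num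
  refine (mul_eq_zero.1 (?_ : (4 : MvPolynomial (Fin n) GP) * _ = 0)).resolve_left h4
  linear_combination h3

/-- The generators `ⁿb_p`. -/
noncomputable def nbG (n p : ℕ) : MvPolynomial (Fin n) GP :=
  if p < n then nc n p else nbCore n p + esymm (Fin n) GP p

lemma nbG_of_lt {n p : ℕ} (h : p < n) : nbG n p = nc n p := if_pos h

lemma nbG_self (n : ℕ) : nbG n n = nbCore n n + esymm (Fin n) GP n := if_neg (lt_irrefl n)

lemma nbG_of_gt {n p : ℕ} (h : n < p) : nbG n p = nbCore n p := by
  rw [nbG, if_neg (by omega), esymm_eq_zero_of_lt h, add_zero]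

/-- The subring generated by the `ⁿb_p` and `ⁿb′_n`. -/
noncomputable def nbSubring (n : ℕ) : Subring (MvPolynomial (Fin n) GP) :=
  Subring.closure ({g : MvPolynomial (Fin n) GP | ∃ p : ℕ, 1 ≤ p ∧ g = nbG n p} ∪ {nbCore n n})

lemma nbG_mem (n p : ℕ) (hp : 1 ≤ p) : nbG n p ∈ nbSubring n :=
  Subring.subset_closure (Or.inl ⟨p, hp, rfl⟩)

lemma nbCore_mem {n p : ℕ} (hp : n ≤ p) : nbCore n p ∈ nbSubring n := by
  rcases hp.eq_or_lt with rfl | hp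
  · exact Subring.subset_closure (Or.inr rfl)
  · rw [← nbG_of_gt hp]; exact nbG_mem n p (by omega)

lemma esymm_top_mem {n : ℕ} (hn : 1 ≤ n) : esymm (Fin n) GP n ∈ nbSubring n := by
  have := Subring.sub_mem _ (nbG_mem n n hn) (nbCore_mem le_rfl)
  rwa [nbG_self, add_sub_cancel_left] at this

lemma nc_mem {n : ℕ} (hn : 1 ≤ n) (p : ℕ) : nc n p ∈ nbSubring n := by
  rcases Nat.eq_zero_or_pos p with rfl | hp
  · simp [nc, nbCore]
  rcases lt_or_ge p n with h | h
  · rw [← nbG_of_lt h]; exact nbG_mem n p hp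
  · rw [nc]
    refine Subring.add_mem _ ?_ (Subring.mul_mem _ (ofNat_mem _ 2) (nbCore_mem h))
    rcases h.eq_or_lt with rfl | h
    · exact esymm_top_mem hn
    · rw [esymm_eq_zero_of_lt h]; exact zero_mem _

/-! ### Reduction modulo 2 -/

/-- Substituting `X_{m i}^{d i}` for `X_i`, with `m` injective and `d i > 0`, is injective. -/
lemma aeval_X_pow_injective {σ τ R : Type*} [CommRing R] (m : σ → τ) (hm : Function.Injective m)
    (d : σ → ℕ) (hd : ∀ i, 0 < d i) :
    Function.Injective
      (aeval (fun i => X (m i) ^ d i) : MvPolynomial σ R →ₐ[R] MvPolynomial τ R) := by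
  classical
  let φ : (σ →₀ ℕ) → (τ →₀ ℕ) := fun a => a.sum fun i k => Finsupp.single (m i) (d i * k)
  have hφm : ∀ a i, φ a (m i) = d i * a i := by
    intro a i
    simp only [φ, Finsupp.sum, Finsupp.finsetSum_apply]
    rw [Finset.sum_eq_single i]
    · simp
    · intro j _ hj
      rw [Finsupp.single_apply, if_neg (fun h => hj (hm h))]
    · intro h
      simp [Finsupp.notMem_support_iff.1 h]
  have hφ : Function.Injective φ := by
    intro a a' h
    ext i
    have := DFunLike.congr_fun h (m i)
    rw [hφm, hφm] at this
    exact Nat.eq_of_mul_eq_mul_left (hd i) this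
  have key : ∀ (F : MvPolynomial σ R) (a : σ →₀ ℕ),
      coeff (φ a) (aeval (fun i => X (m i) ^ d i) F : MvPolynomial τ R) = coeff a F := by
    intro F a
    induction F using MvPolynomial.induction_on' with
    | monomial b r =>
      have : (aeval (fun i => X (m i) ^ d i) (monomial b r) : MvPolynomial τ R) =
          monomial (φ b) r := by
        rw [aeval_monomial, monomial_eq (s := φ b)]
        simp only [φ]
        congr 1
        rw [Finsupp.prod_sum_index (by simp) (by intros; rw [pow_add])]
        refine Finsupp.prod_congr fun i _ => ?_
        rw [Finsupp.prod_single_index (by simp), pow_mul]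
      rw [this, coeff_monomial, coeff_monomial]
      simp [hφ.eq_iff]
    | add p q hp hq => rw [map_add, coeff_add, coeff_add, hp, hq]
  intro F F' h
  ext a
  rw [← key F, ← key F', h]

/-- A homomorphism `K[E] → L[E]` fixing the variables is injective as soon as its reduction
`K → L` modulo the variables is: look at a minimal exponent. -/
lemma injective_of_constantCoeff {σ K L : Type*} [CommRing K] [CommRing L]
    (Θ : MvPolynomial σ K →+* MvPolynomial σ L) (hX : ∀ i, Θ (X i) = X i)
    (hC : ∀ a, constantCoeff (Θ (C a)) = 0 → a = 0) : Function.Injective Θ := by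
  classical
  rw [injective_iff_map_eq_zero]
  intro F hF
  by_contra hne
  obtain ⟨a, ha, hmin⟩ := F.support.exists_minimal (support_nonempty.2 hne)
  have hmon : ∀ b : σ →₀ ℕ, ∀ r, Θ (monomial b r) = Θ (C r) * monomial b 1 := by
    intro b r
    have : Θ (monomial b 1) = monomial b 1 := by
      rw [monomial_eq, C_1, one_mul, Finsupp.prod, map_prod]
      simp [hX]
    rw [← mul_one r, ← C_mul_monomial, map_mul, this, mul_one]
  have h1 : coeff a (Θ F) = constantCoeff (Θ (C (coeff a F))) := by
    conv_lhs => rw [F.as_sum, map_sum, coeff_sum]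
    rw [Finset.sum_eq_single a]
    · rw [hmon, coeff_mul_monomial', if_pos le_rfl, tsub_self, mul_one, constantCoeff_eq]
    · intro b hb hba
      rw [hmon, coeff_mul_monomial', if_neg]
      exact fun hle => hba (le_antisymm hle (hmin hb hle))
    · intro h; exact absurd ha h
  rw [hF, coeff_zero] at h1
  exact (mem_support_iff.1 ha) (hC _ h1.symm)

/-- The indices of the free generators `ⁿb_p` of `B^{(n)}` of degree at least `n`: the indices
`p ≥ n` not of the form `2q` with `q ≥ n`. -/
def FreeIndex (n : ℕ) : Type := {p : ℕ // n ≤ p ∧ (p < 2 * n ∨ Odd p)}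

/-- The odd part of `p`. -/
def oddPart (p : ℕ) : ℕ := ordCompl[2] p

lemma oddPart_injective (n : ℕ) :
    Function.Injective (fun p : FreeIndex n => oddPart p.1) := by
  have key : ∀ p q k l : ℕ, n ≤ p → (q < 2 * n ∨ Odd q) → 2 ^ k * oddPart p = p →
      2 ^ l * oddPart p = q → l ≤ k := by
    intro p q k l hp hq h1 h2
    by_contra! hlt
    obtain ⟨j, rfl⟩ := Nat.exists_eq_add_of_le' hlt
    have : q = 2 ^ j * (2 * p) := by
      rw [← h2]; conv_rhs => rw [← h1]
      rw [Nat.succ_eq_add_one]; ring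
    have h3 : 0 < 2 ^ j := by positivity
    rcases hq with hq | hq
    · have : 2 * p ≤ q := by rw [this]; exact Nat.le_mul_of_pos_left _ h3
      omega
    · rw [this] at hq
      exact absurd ((Nat.odd_mul.1 (Nat.odd_mul.1 hq).2).1) (by decide)
  intro p q h
  simp only at h
  have h1 : 2 ^ p.1.factorization 2 * oddPart p.1 = p.1 :=
    Nat.ordProj_mul_ordCompl_eq_self p.1 2
  have h2 : 2 ^ q.1.factorization 2 * oddPart q.1 = q.1 :=
    Nat.ordProj_mul_ordCompl_eq_self q.1 2
  have hpq : p.1.factorization 2 = q.1.factorization 2 :=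
    le_antisymm
      (key q.1 p.1 _ _ q.2.1 p.2.2 h2 (by rw [← h]; exact h1))
      (key p.1 q.1 _ _ p.2.1 q.2.2 h1 (by rw [h]; exact h2))
  refine Subtype.ext ?_
  rw [← h1, ← h2, hpq, h]

/-- The images of the `b_p` modulo 2, where the relations read `b_{2p} = b_p²`. -/
noncomputable def bTwo (p : ℕ) : MvPolynomial ℕ (ZMod 2) :=
  if p = 0 then 1 else X (oddPart p) ^ 2 ^ p.factorization 2

lemma exists_reduction : ∃ ψ : GP →+* MvPolynomial ℕ (ZMod 2), ∀ p, ψ (bG p) = bTwo p := by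
  refine exists_lift bTwo (if_pos rfl) fun p hp => ?_
  have h2 : (2 : MvPolynomial ℕ (ZMod 2)) = 0 := CharTwo.two_eq_zero
  have h3 : bTwo (2 * p) = bTwo p ^ 2 := by
    rw [bTwo, bTwo, if_neg (by omega), if_neg (by omega), ← pow_mul, ← pow_succ]
    have hf : (2 * p).factorization 2 = p.factorization 2 + 1 := by
      rw [Nat.factorization_mul (by norm_num) (by omega)]
      simp [Nat.Prime.factorization Nat.prime_two, add_comm]
    have ho : oddPart (2 * p) = oddPart p := by
      rw [oddPart, oddPart, Nat.ordCompl_mul]; simp [Nat.Prime.factorization Nat.prime_two]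
    rw [hf, ho]
  have h4 : (-1 : MvPolynomial ℕ (ZMod 2)) = 1 := CharTwo.neg_eq 1
  rw [h3, h2, h4]
  simp [CharTwo.add_self_eq_zero]

/-- The variable standing for `e_i`, with `E_0 = 1` and `E_i = 0` for `i > n`. -/
noncomputable def eVar (n : ℕ) (R : Type*) [CommRing R] (i : ℕ) : MvPolynomial (Fin n) R :=
  if i = 0 then 1 else if h : i - 1 < n then X ⟨i - 1, h⟩ else 0

lemma esymmAlgHom_eVar (n : ℕ) (R : Type*) [CommRing R] (i : ℕ) :
    (esymmAlgHom (Fin n) R n (eVar n R i) : MvPolynomial (Fin n) R) = esymm (Fin n) R i := by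
  rcases i with _ | i
  · simp [eVar]
  · rw [eVar, if_neg (by omega)]
    split_ifs with h
    · rw [esymmAlgHom_apply, aeval_X]
      simp
    · rw [esymm, Finset.powersetCard_eq_empty.2 (by simp at h ⊢; omega)]
      simp

/-- The substitution `X_i ↦ e_{i+1}` of the elementary symmetric polynomials for the variables. -/
noncomputable def symHom (n : ℕ) (R : Type*) [CommRing R] :
    MvPolynomial (Fin n) R →+* MvPolynomial (Fin n) R :=
  ((symmetricSubalgebra (Fin n) R).val.comp (esymmAlgHom (Fin n) R n)).toRingHom

lemma symHom_C (n : ℕ) {R : Type*} [CommRing R] (a : R) : symHom n R (C a) = C a :=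
  AlgHom.commutes _ a

lemma symHom_eVar (n : ℕ) (R : Type*) [CommRing R] (i : ℕ) :
    symHom n R (eVar n R i) = esymm (Fin n) R i := esymmAlgHom_eVar n R i

lemma symHom_X (n : ℕ) (R : Type*) [CommRing R] (i : Fin n) :
    symHom n R (X i) = esymm (Fin n) R ((i : ℕ) + 1) := by
  rw [← symHom_eVar, eVar, if_neg (by omega), dif_pos (by simp)]
  rfl

/-- The image of `Σ_{i<p} e_i b_{p-i}` modulo 2, in terms of variables `E_i` for the `e_i`. -/
noncomputable def coreTwo (n p : ℕ) : MvPolynomial (Fin n) (MvPolynomial ℕ (ZMod 2)) :=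
  ∑ i ∈ Finset.range p, eVar n _ i * C (bTwo (p - i))

/-- The homomorphism sending `E_i ↦ E_i` and `Y_p` to the reduction of `ⁿb_p`. -/
noncomputable def freeTwo (n : ℕ) :
    MvPolynomial (Fin n) (MvPolynomial (FreeIndex n) (ZMod 2)) →+*
      MvPolynomial (Fin n) (MvPolynomial ℕ (ZMod 2)) :=
  eval₂Hom (aeval (fun p : FreeIndex n => coreTwo n p.1) :
    MvPolynomial (FreeIndex n) (ZMod 2) →ₐ[ZMod 2] _).toRingHom X

/-- Modulo 2, the `e_i` and the `ⁿb_p` with `p` a free index are algebraically independent. -/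
lemma freeTwo_injective (n : ℕ) (hn : 1 ≤ n) : Function.Injective (freeTwo n) := by
  refine injective_of_constantCoeff _ (fun i => by simp [freeTwo]) fun a ha => ?_
  have hinj := aeval_X_pow_injective (R := ZMod 2) _ (oddPart_injective n)
    (fun p => 2 ^ p.1.factorization 2) (fun p => by positivity)
  refine hinj ?_
  rw [map_zero, ← ha]
  have : (constantCoeff.comp ((freeTwo n).comp C) :
      MvPolynomial (FreeIndex n) (ZMod 2) →+* MvPolynomial ℕ (ZMod 2)) =
      (aeval (fun p : FreeIndex n => X (oddPart p.1) ^ 2 ^ p.1.factorization 2) :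
        MvPolynomial (FreeIndex n) (ZMod 2) →ₐ[ZMod 2] MvPolynomial ℕ (ZMod 2)).toRingHom := by
    refine MvPolynomial.ringHom_ext (fun r => ?_) fun p => ?_
    · simp [freeTwo]
    · have hp : p.1 ≠ 0 := by have := p.2.1; omega
      obtain ⟨k, hk⟩ := Nat.exists_eq_succ_of_ne_zero hp
      simp only [freeTwo, RingHom.comp_apply, AlgHom.toRingHom_eq_coe, coe_eval₂Hom, eval₂_C,
        RingHom.coe_coe, aeval_X, coreTwo, map_sum, map_mul, constantCoeff_C]
      rw [Finset.sum_eq_single_of_mem 0 (Finset.mem_range.2 (Nat.pos_of_ne_zero hp))]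
      · simp [eVar, bTwo, hp]
      · intro i _ hi
        rw [eVar, if_neg hi]
        split_ifs <;> simp
  exact (RingHom.congr_fun this a).symm

/-- The polynomial ring on the free generators of `B^{(n)}`, mapped to `Γ′[x_1, …, x_n]`. -/
noncomputable def freeHom (n : ℕ) :
    MvPolynomial (Fin n) (MvPolynomial (FreeIndex n) ℤ) →+* MvPolynomial (Fin n) GP :=
  eval₂Hom (aeval (fun p : FreeIndex n => nbCore n p.1) :
    MvPolynomial (FreeIndex n) ℤ →ₐ[ℤ] _).toRingHom
    (fun i => if (i : ℕ) + 1 < n then nc n (i + 1) else esymm (Fin n) GP n)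

lemma freeHom_range_le (n : ℕ) (hn : 1 ≤ n) (a) : freeHom n a ∈ nbSubring n := by
  rw [freeHom, coe_eval₂Hom, eval₂_eq']
  refine sum_mem fun d _ => Subring.mul_mem _ ?_ (prod_mem fun i _ => Subring.pow_mem _ ?_ _)
  · generalize coeff d a = b
    induction b using MvPolynomial.induction_on with
    | C z => simp
    | add p q hp hq => rw [map_add]; exact add_mem hp hq
    | mul_X p j hp =>
      rw [map_mul]
      refine mul_mem hp ?_
      simpa using nbCore_mem j.2.1
  · split_ifs
    · exact nc_mem hn _
    · exact esymm_top_mem hn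

/-- The free generators generate `B^{(n)}`, since `ⁿb_{2p}` can be eliminated for `p ≥ n`. -/
lemma nbSubring_le_range (n : ℕ) (hn : 1 ≤ n) : nbSubring n ≤ (freeHom n).range := by
  set B := (freeHom n).range with hB
  have htop : esymm (Fin n) GP n ∈ B :=
    ⟨X ⟨n - 1, by omega⟩, by simp [freeHom]; omega⟩
  have hncLt : ∀ p, p < n → nc n p ∈ B := by
    intro p hp
    rcases p with _ | p
    · simp [nc, nbCore]
    · exact ⟨X ⟨p, by omega⟩, by simp [freeHom, hp]⟩
  have hesymm : ∀ p, n ≤ p → esymm (Fin n) GP p ∈ B := by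
    intro p hp
    rcases hp.eq_or_lt with rfl | hp
    · exact htop
    · rw [esymm_eq_zero_of_lt hp]; exact zero_mem _
  have hcore : ∀ p, n ≤ p → nbCore n p ∈ B := by
    intro p
    induction p using Nat.strong_induction_on with
    | _ p ih =>
    intro hp
    by_cases hfree : p < 2 * n ∨ Odd p
    · exact ⟨C (X ⟨p, hp, hfree⟩), by simp [freeHom]; exact aeval_X _ _⟩
    · push Not at hfree
      obtain ⟨q, rfl⟩ := (Nat.not_odd_iff_even.1 hfree.2).two_dvd
      have hqn : n ≤ q := by omega
      have hnc : ∀ r, r < 2 * q → nc n r ∈ B := by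
        intro r hr
        rcases lt_or_ge r n with h | h
        · exact hncLt r h
        · exact add_mem (hesymm r h) (mul_mem (ofNat_mem _ 2) (ih r hr h))
      have hrel := nbCore_relation n q hqn
      obtain ⟨r, rfl⟩ := Nat.exists_eq_add_of_le' (show 1 ≤ q by omega)
      rw [Finset.sum_Icc_succ_top (by omega), Nat.sub_self] at hrel
      have h0 : nc n 0 = 1 := by simp [nc, nbCore]
      have hrel' : nbCore n (2 * (r + 1)) = -(-1) ^ (r + 1) *
          (nbCore n (r + 1) * (nbCore n (r + 1) + esymm (Fin n) GP (r + 1)) +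
            ∑ i ∈ Finset.Icc 1 r, (-1) ^ i * (nbCore n (r + 1 + i) * nc n (r + 1 - i))) := by
        rw [h0, ← two_mul (r + 1)] at hrel
        linear_combination (-1) ^ (r + 1) * hrel - nbCore n (2 * (r + 1)) *
          neg_one_pow_mul_self' (R := MvPolynomial (Fin n) GP) (r + 1)
      rw [hrel']
      have hsign : ∀ k, (-1 : MvPolynomial (Fin n) GP) ^ k ∈ B :=
        fun k => pow_mem (neg_mem (one_mem _)) k
      have hr := ih (r + 1) (by omega) hqn
      refine mul_mem (neg_mem (hsign _)) (add_mem (mul_mem hr (add_mem hr (hesymm _ hqn))) ?_)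
      refine sum_mem fun i hi => mul_mem (hsign _) (mul_mem ?_ (hnc _ (by omega)))
      rw [Finset.mem_Icc] at hi
      exact ih _ (by omega) (by omega)
  rw [nbSubring, Subring.closure_le]
  rintro _ (⟨p, hp, rfl⟩ | rfl)
  · rw [nbG]
    split_ifs with h
    · exact hncLt p h
    · exact add_mem (hcore p (by omega)) (hesymm p (by omega))
  · exact hcore n le_rfl

/-- `B^{(n)}` is saturated at 2: it is generated by `freeHom`, whose reduction modulo 2 is injective
by `freeTwo_injective`, so that `2f = freeHom G` forces 2 to divide `G`. -/
lemma mem_of_two_mul_mem (n : ℕ) (hn : 1 ≤ n) (f : MvPolynomial (Fin n) GP)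
    (hf : 2 * f ∈ nbSubring n) : f ∈ nbSubring n := by
  obtain ⟨G, hG⟩ := nbSubring_le_range n hn hf
  obtain ⟨ψ, hψ⟩ := exists_reduction
  have h2 : (2 : MvPolynomial (Fin n) (MvPolynomial ℕ (ZMod 2))) = 0 := CharTwo.two_eq_zero
  let q := MvPolynomial.map (σ := FreeIndex n) (Int.castRingHom (ZMod 2))
  have hcore : ∀ p, symHom n _ (coreTwo n p) = MvPolynomial.map ψ (nbCore n p) := by
    intro p
    simp only [coreTwo, nbCore, map_sum, map_mul, symHom_eVar, symHom_C, map_esymm, map_C, hψ]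
  have hcomm : (MvPolynomial.map ψ).comp (freeHom n) =
      ((symHom n _).comp (freeTwo n)).comp (MvPolynomial.map q) := by
    refine MvPolynomial.ringHom_ext (fun a => ?_) fun i => ?_
    · refine RingHom.congr_fun (f := ((MvPolynomial.map ψ).comp (freeHom n)).comp C)
        (g := (((symHom n _).comp (freeTwo n)).comp (MvPolynomial.map q)).comp C) ?_ a
      refine MvPolynomial.ringHom_ext (fun z => by simp) fun p => ?_
      simp [freeHom, freeTwo, q, hcore]
    · have hi : (i : ℕ) < n := i.2
      simp only [RingHom.comp_apply, map_X, freeHom, freeTwo, coe_eval₂Hom, eval₂_X, symHom_X]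
      split_ifs with h
      · rw [nc, map_add, map_mul, map_esymm, map_ofNat, h2, zero_mul, add_zero]
      · rw [map_esymm, show (i : ℕ) + 1 = n by omega]
  have hGq : MvPolynomial.map q G = 0 := by
    refine freeTwo_injective n hn (esymmAlgHom_fin_injective _ le_rfl (Subtype.ext ?_))
    have h := RingHom.congr_fun hcomm G
    rw [RingHom.comp_apply, hG, map_mul, map_ofNat, h2, zero_mul] at h
    rw [map_zero, map_zero]
    exact h.symm
  have hdvd : C (C (2 : ℤ)) ∣ G := by
    refine (C_dvd_iff_map_hom_eq_zero q _ ?_ G).2 hGq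
    intro r
    rw [C_dvd_iff_map_hom_eq_zero (Int.castRingHom (ZMod 2)) 2]
    intro z
    simpa using ZMod.intCast_zmod_eq_zero_iff_dvd z 2
  obtain ⟨H, rfl⟩ := hdvd
  have : f = freeHom n H := by
    have h2' : (2 : MvPolynomial (Fin n) GP) ≠ 0 := two_ne_zero
    refine mul_left_cancel₀ h2' ?_
    have h2C : C (C (2 : ℤ)) = (2 : MvPolynomial (Fin n) (MvPolynomial (FreeIndex n) ℤ)) := by
      rw [map_ofNat, map_ofNat]
    rw [← hG, h2C, map_mul, map_ofNat]
  rw [this]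
  exact freeHom_range_le n hn H

/-! ### Invariance of the `ⁿb_p` -/

/-- `s` is a ring endomorphism of `Γ′[x_1, …, x_n]` acting as `s_□`, with respect to the two
distinguished indices `k` and `l`. -/
structure IsSBox {n : ℕ} (k l : Fin n)
    (s : MvPolynomial (Fin n) GP →+* MvPolynomial (Fin n) GP) : Prop where
  ne : k ≠ l
  map_left : s (X k) = -X l
  map_right : s (X l) = -X k
  map_other : ∀ j, j ≠ k → j ≠ l → s (X j) = X j
  map_b : ∀ p, 1 ≤ p → s (C (bG p)) = C (bG p) + (X k + X l) *
    ∑ j ∈ Finset.range p, (∑ a ∈ Finset.range (j + 1), X k ^ a * X l ^ (j - a)) *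
      C (cG (p - 1 - j))

/-- The series `(1 + a t)(1 + b t)`. -/
noncomputable def quadSeries {R : Type*} [CommRing R] (a b : R) : PowerSeries R :=
  (1 + PowerSeries.C a * PowerSeries.X) * (1 + PowerSeries.C b * PowerSeries.X)

lemma quadSeries_ne_zero {R : Type*} [CommRing R] [Nontrivial R] (a b : R) :
    quadSeries a b ≠ 0 := by
  intro h
  have := congrArg PowerSeries.constantCoeff h
  simp [quadSeries] at this

lemma geom_mul {R : Type*} [CommRing R] (a : R) :
    PowerSeries.mk (fun i => a ^ i) * (1 + PowerSeries.C (-a) * PowerSeries.X) = 1 := by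
  rw [mul_add, mul_one, ← mul_assoc]
  ext p
  rcases p with _ | p
  · simp
  · rw [map_add, PowerSeries.coeff_succ_mul_X, mul_comm, PowerSeries.coeff_C_mul]
    simp [PowerSeries.coeff_one, pow_succ']

lemma IsSBox.map_eSeries {n : ℕ} {k l : Fin n}
    {s : MvPolynomial (Fin n) GP →+* MvPolynomial (Fin n) GP} (h : IsSBox k l s) :
    PowerSeries.map s (eSeries n) * quadSeries (X k) (X l) =
      quadSeries (-X k) (-X l) * eSeries n := by
  have hl : l ∈ Finset.univ.erase k := by simp [h.ne.symm]
  rw [eSeries_eq_prod, ← Finset.mul_prod_erase _ _ (Finset.mem_univ k),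
    ← Finset.mul_prod_erase _ _ hl]
  have hrest : ∀ j ∈ (Finset.univ.erase k).erase l,
      PowerSeries.map s (1 + PowerSeries.C (X j) * PowerSeries.X) =
        1 + PowerSeries.C (X j) * PowerSeries.X := by
    intro j hj
    simp only [Finset.mem_erase, Finset.mem_univ, and_true] at hj
    simp [h.map_other j hj.2 hj.1]
  rw [map_mul, map_mul, map_prod, Finset.prod_congr rfl hrest]
  simp only [map_add, map_mul, map_one, PowerSeries.map_C, PowerSeries.map_X, h.map_left,
    h.map_right, quadSeries]
  ring

lemma IsSBox.map_cSeries {n : ℕ} {k l : Fin n}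
    {s : MvPolynomial (Fin n) GP →+* MvPolynomial (Fin n) GP} (h : IsSBox k l s) :
    PowerSeries.map s (PowerSeries.map C cSeries) * quadSeries (-X k) (-X l) =
      PowerSeries.map C cSeries * quadSeries (X k) (X l) := by
  set H : PowerSeries (MvPolynomial (Fin n) GP) :=
    PowerSeries.mk (fun i => X k ^ i) * PowerSeries.mk (fun i => X l ^ i) with hH
  have hH1 : H * quadSeries (-X k) (-X l) = 1 := by
    have h1 := geom_mul (X k : MvPolynomial (Fin n) GP)
    have h2 := geom_mul (X l : MvPolynomial (Fin n) GP)
    rw [hH, quadSeries, mul_mul_mul_comm, h1, h2, one_mul]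
  have hcoeff : ∀ j, PowerSeries.coeff j H =
      ∑ a ∈ Finset.range (j + 1), X k ^ a * X l ^ (j - a) := by
    intro j
    rw [hH, PowerSeries.coeff_mul, Finset.Nat.sum_antidiagonal_eq_sum_range_succ_mk]
    simp
  have hmap : PowerSeries.map s (PowerSeries.map C cSeries) = PowerSeries.map C cSeries +
      PowerSeries.C (2 * (X k + X l)) * (H * PowerSeries.map C cSeries * PowerSeries.X) := by
    ext1 p
    rcases p with _ | p
    · rw [map_add, PowerSeries.coeff_C_mul, PowerSeries.coeff_zero_mul_X]
      simp [-PowerSeries.coeff_zero_eq_constantCoeff, cSeries, cG]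
    · rw [map_add, PowerSeries.coeff_C_mul, PowerSeries.coeff_succ_mul_X, PowerSeries.coeff_mul,
        Finset.Nat.sum_antidiagonal_eq_sum_range_succ_mk]
      simp only [hcoeff, PowerSeries.coeff_map, cSeries, PowerSeries.coeff_mk]
      have := h.map_b (p + 1) (by omega)
      rw [Nat.add_sub_cancel] at this
      rw [show cG (p + 1) = 2 * bG (p + 1) from if_neg (by omega), map_mul, map_ofNat, map_mul,
        map_ofNat, this]
      ring
  have hquad : quadSeries (X k) (X l) = quadSeries (-X k) (-X l) +
      PowerSeries.C (2 * (X k + X l) : MvPolynomial (Fin n) GP) * PowerSeries.X := by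
    simp only [quadSeries, map_mul, map_add, map_neg, map_ofNat]
    ring
  rw [hmap, hquad]
  linear_combination (PowerSeries.C (2 * (X k + X l)) * PowerSeries.map C cSeries *
    PowerSeries.X) * hH1

lemma IsSBox.map_nc {n : ℕ} {k l : Fin n}
    {s : MvPolynomial (Fin n) GP →+* MvPolynomial (Fin n) GP} (h : IsSBox k l s) (p : ℕ) :
    s (nc n p) = nc n p := by
  have h1 : PowerSeries.map s (ncSeries n) = ncSeries n := by
    refine mul_right_cancel₀ (quadSeries_ne_zero (X k) (X l)) ?_
    refine mul_right_cancel₀ (quadSeries_ne_zero (-X k) (-X l)) ?_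
    rw [ncSeries, map_mul]
    linear_combination (PowerSeries.map s (PowerSeries.map C cSeries) *
      quadSeries (-X k) (-X l)) * h.map_eSeries + (quadSeries (-X k) (-X l) * eSeries n) *
        h.map_cSeries
  have h2 := congrArg (PowerSeries.coeff p) h1
  rwa [PowerSeries.coeff_map, coeff_ncSeries] at h2

lemma esymm_top_eq_prod (n : ℕ) (R : Type*) [CommRing R] : esymm (Fin n) R n = ∏ i, X i := by
  have h := Finset.powersetCard_self (Finset.univ : Finset (Fin n))
  simp only [Finset.card_univ, Fintype.card_fin] at h
  rw [esymm, h, Finset.sum_singleton]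

/-- The `ⁿc_p` and `e_n` are invariant under `s_□`, hence so is `B^{(n)}` as there is no
2-torsion. -/
lemma IsSBox.map_of_mem {n : ℕ} {k l : Fin n}
    {s : MvPolynomial (Fin n) GP →+* MvPolynomial (Fin n) GP} (h : IsSBox k l s)
    {f : MvPolynomial (Fin n) GP} (hf : f ∈ nbSubring n) : s f = f := by
  have hl : l ∈ Finset.univ.erase k := by simp [h.ne.symm]
  have htop : s (esymm (Fin n) GP n) = esymm (Fin n) GP n := by
    rw [esymm_top_eq_prod, ← Finset.mul_prod_erase _ _ (Finset.mem_univ k),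
      ← Finset.mul_prod_erase _ _ hl, map_mul, map_mul, map_prod, h.map_left, h.map_right]
    rw [Finset.prod_congr rfl fun j hj => ?_]
    · rw [← mul_assoc, ← mul_assoc]; congr 1; ring
    · simp only [Finset.mem_erase, Finset.mem_univ, and_true] at hj
      exact h.map_other j hj.2 hj.1
  have hesymm : ∀ p, n ≤ p → s (esymm (Fin n) GP p) = esymm (Fin n) GP p := by
    intro p hp
    rcases hp.eq_or_lt with rfl | hp
    · exact htop
    · rw [esymm_eq_zero_of_lt hp, map_zero]
  have hcore : ∀ p, n ≤ p → s (nbCore n p) = nbCore n p := by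
    intro p hp
    have h1 := h.map_nc p
    rw [nc, map_add, map_mul, map_ofNat, hesymm p hp] at h1
    exact mul_left_cancel₀ two_ne_zero (add_left_cancel h1)
  have hle : nbSubring n ≤ s.eqLocus (RingHom.id _) := by
    rw [nbSubring, Subring.closure_le]
    rintro _ (⟨p, -, rfl⟩ | rfl)
    · simp only [SetLike.mem_coe, RingHom.mem_eqLocus, RingHom.id_apply]
      rw [nbG]
      split_ifs with hp
      · exact h.map_nc p
      · rw [map_add, hcore p (by omega), hesymm p (by omega)]
    · exact hcore n le_rfl
  exact hle hf

lemma rename_of_mem {n : ℕ} {f : MvPolynomial (Fin n) GP} (hf : f ∈ nbSubring n)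
    (e : Equiv.Perm (Fin n)) : rename e f = f := by
  have hcore : ∀ p, rename e (nbCore n p) = nbCore n p := by
    intro p
    simp only [nbCore, map_sum, map_mul, rename_C, rename_esymm]
  have hle : nbSubring n ≤ (rename e : MvPolynomial (Fin n) GP →ₐ[GP] _).toRingHom.eqLocus
      (RingHom.id _) := by
    rw [nbSubring, Subring.closure_le]
    rintro _ (⟨p, -, rfl⟩ | rfl)
    · change rename e (nbG n p) = nbG n p
      rw [nbG]
      split_ifs
      · rw [nc, map_add, map_mul, hcore, rename_esymm, map_ofNat]
      · rw [map_add, hcore, rename_esymm]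
    · exact hcore n
  exact hle hf

/-! ### Symmetric polynomials over `B^{(n)}` -/

/-- The evaluation `B^{(n)}[x_1, …, x_n] → Γ′[x_1, …, x_n]`. -/
noncomputable def evB (n : ℕ) :
    MvPolynomial (Fin n) (nbSubring n) →+* MvPolynomial (Fin n) GP :=
  eval₂Hom (nbSubring n).subtype X

lemma symHom_isSymmetric (n : ℕ) {R : Type*} [CommRing R] (G : MvPolynomial (Fin n) R) :
    (symHom n R G).IsSymmetric := (esymmAlgHom (Fin n) R n G).2

lemma exists_symHom_eq (n : ℕ) {R : Type*} [CommRing R] (f : MvPolynomial (Fin n) R)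
    (hf : f.IsSymmetric) : ∃ G, symHom n R G = f := by
  obtain ⟨G, hG⟩ := (esymmAlgHom_fin_bijective R n).2 ⟨f, hf⟩
  exact ⟨G, congrArg Subtype.val hG⟩

lemma evB_esymm (n i : ℕ) : evB n (esymm (Fin n) (nbSubring n) i) = esymm (Fin n) GP i := by
  simp [esymm, evB]

/-- Up to a power of 2, a symmetric polynomial over `Γ′` is a symmetric polynomial over `B^{(n)}`,
since `ⁿc_p = Σ e_i c_{p-i}` recursively expresses `c_p = 2b_p` through the `ⁿc_p` and `e_i`. -/
lemma exists_two_pow_mul (n : ℕ) (hn : 1 ≤ n) (f : MvPolynomial (Fin n) GP)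
    (hf : f.IsSymmetric) : ∃ N : ℕ, ∃ F : MvPolynomial (Fin n) (nbSubring n),
      F.IsSymmetric ∧ evB n F = 2 ^ N * f := by
  set T := ((evB n).comp (symHom n (nbSubring n))).range with hT
  have hesymm : ∀ i, esymm (Fin n) GP i ∈ T := fun i =>
    ⟨eVar n _ i, by rw [RingHom.comp_apply, symHom_eVar, evB_esymm]⟩
  have hB : ∀ b ∈ nbSubring n, b ∈ T := fun b hb =>
    ⟨C ⟨b, hb⟩, by rw [RingHom.comp_apply, symHom_C]; simp [evB]⟩
  have h2b : ∀ p, 1 ≤ p → 2 * C (bG p) ∈ T := by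
    intro p
    induction p using Nat.strong_induction_on with
    | _ p ih =>
    intro hp
    have h1 : ∑ i ∈ Finset.range p, esymm (Fin n) GP i * (2 * C (bG (p - i))) ∈ T := by
      have h2 : ∑ i ∈ Finset.range p, esymm (Fin n) GP i * (2 * C (bG (p - i))) =
          nc n p - esymm (Fin n) GP p := by
        rw [nc, add_sub_cancel_left, nbCore, Finset.mul_sum]
        exact Finset.sum_congr rfl fun i _ => by ring
      rw [h2]
      exact sub_mem (hB _ (nc_mem hn p)) (hesymm p)
    obtain ⟨p, rfl⟩ := Nat.exists_eq_add_of_le' hp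
    rw [Finset.sum_range_succ', esymm_zero, one_mul] at h1
    refine (add_mem_cancel_left (sum_mem fun i hi => mul_mem (hesymm _) ?_)).1 h1
    rw [Finset.mem_range] at hi
    exact ih _ (by omega) (by omega)
  let P : Subring (MvPolynomial (Fin n) GP) :=
    { carrier := {g | ∃ N : ℕ, 2 ^ N * g ∈ T}
      mul_mem' := by
        rintro a b ⟨N, ha⟩ ⟨M, hb⟩
        refine ⟨N + M, ?_⟩
        have : (2 : MvPolynomial (Fin n) GP) ^ (N + M) * (a * b) =
          (2 ^ N * a) * (2 ^ M * b) := by ring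
        rw [this]
        exact mul_mem ha hb
      one_mem' := ⟨0, by simp⟩
      add_mem' := by
        rintro a b ⟨N, ha⟩ ⟨M, hb⟩
        refine ⟨N + M, ?_⟩
        have : (2 : MvPolynomial (Fin n) GP) ^ (N + M) * (a + b) =
          2 ^ M * (2 ^ N * a) + 2 ^ N * (2 ^ M * b) := by ring
        rw [this]
        exact add_mem (mul_mem (pow_mem (ofNat_mem _ 2) _) ha)
          (mul_mem (pow_mem (ofNat_mem _ 2) _) hb)
      zero_mem' := ⟨0, by simp⟩
      neg_mem' := by
        rintro a ⟨N, ha⟩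
        exact ⟨N, by rw [mul_neg]; exact neg_mem ha⟩ }
  have hTP : ∀ a ∈ T, a ∈ P := fun a ha => ⟨0, by simpa using ha⟩
  have hC : ∀ a : GP, C a ∈ P := fun a =>
    gammaPrime_induction (P.comap C) (fun p hp => ⟨1, by simpa using h2b p hp⟩) a
  have hfP : f ∈ P := by
    obtain ⟨G, rfl⟩ := exists_symHom_eq n f hf
    clear hf
    induction G using MvPolynomial.induction_on with
    | C a => rw [symHom_C]; exact hC a
    | add p q hp hq => rw [map_add]; exact add_mem hp hq
    | mul_X p i hp => rw [map_mul, symHom_X]; exact mul_mem hp (hTP _ (hesymm _))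
  obtain ⟨N, G, hG⟩ := hfP
  exact ⟨N, symHom n _ G, symHom_isSymmetric n G, hG⟩

/-- The elementary symmetric polynomials in the `x_i²` lie in `B^{(n)}`: up to sign they are the
coefficients of `∏ (1 - x_i² t²)`, which is the product of the generating series of the `ⁿc_p` with
its value at `-t`. -/
lemma esymm_sq_mem (n : ℕ) (hn : 1 ≤ n) (k : ℕ) :
    aeval (fun i => X i ^ 2) (esymm (Fin n) ℤ k) ∈ nbSubring n := by
  have h1 : eSeries n * PowerSeries.rescale (-1) (eSeries n) =
      ∏ i : Fin n, (1 + PowerSeries.C (-X i ^ 2) * PowerSeries.X ^ 2) := by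
    rw [eSeries_eq_prod, map_prod, ← Finset.prod_mul_distrib]
    refine Finset.prod_congr rfl fun i _ => ?_
    simp only [map_add, map_one, map_mul, PowerSeries.rescale_X, map_neg, map_pow]
    have : PowerSeries.rescale (-1) (PowerSeries.C (X i : MvPolynomial (Fin n) GP)) =
        PowerSeries.C (X i) := by
      ext1 p
      rw [PowerSeries.coeff_rescale, PowerSeries.coeff_C]
      split_ifs with h <;> simp [h]
    rw [this]
    ring
  have h2 : aeval (fun i => -X i ^ 2) (esymm (Fin n) ℤ k) =
      (-1) ^ k * (aeval (fun i => X i ^ 2) (esymm (Fin n) ℤ k) : MvPolynomial (Fin n) GP) := by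
    simp only [esymm, map_sum, map_prod, aeval_X, Finset.mul_sum]
    refine Finset.sum_congr rfl fun s hs => ?_
    rw [Finset.prod_neg, (Finset.mem_powersetCard.1 hs).2]
  have h3 : aeval (fun i => -X i ^ 2) (esymm (Fin n) ℤ k) ∈ nbSubring n := by
    have h := coeff_prod_one_add (R := ℤ)
      (fun i : Fin n => (-X i ^ 2 : MvPolynomial (Fin n) GP)) 2 two_pos k
    rw [← h, ← h1, ← ncSeries_mul_rescale, PowerSeries.coeff_mul]
    refine sum_mem fun x _ => mul_mem ?_ ?_
    · rw [coeff_ncSeries]; exact nc_mem hn _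
    · rw [PowerSeries.coeff_rescale, coeff_ncSeries]
      exact mul_mem (pow_mem (neg_mem (one_mem _)) _) (nc_mem hn _)
  have h4 : aeval (fun i => X i ^ 2) (esymm (Fin n) ℤ k) =
      (-1) ^ k * (aeval (fun i => -X i ^ 2) (esymm (Fin n) ℤ k) : MvPolynomial (Fin n) GP) := by
    rw [h2, ← mul_assoc, neg_one_pow_mul_self', one_mul]
  rw [h4]
  exact mul_mem (pow_mem (neg_mem (one_mem _)) _) h3

/-- Symmetric polynomials in the `x_i²` with coefficients in `B^{(n)}` evaluate into `B^{(n)}`. -/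
lemma evB_expand_mem (n : ℕ) (hn : 1 ≤ n) (H : MvPolynomial (Fin n) (nbSubring n))
    (hH : H.IsSymmetric) : evB n (expand 2 H) ∈ nbSubring n := by
  obtain ⟨G, rfl⟩ := exists_symHom_eq n H hH
  clear hH
  induction G using MvPolynomial.induction_on with
  | C a => rw [symHom_C, expand_C]; simp [evB]
  | add p q hp hq => rw [map_add, map_add, map_add]; exact add_mem hp hq
  | mul_X p i hp =>
    rw [map_mul, map_mul, map_mul, symHom_X]
    refine mul_mem hp ?_
    convert esymm_sq_mem n hn (i + 1) using 1
    simp [esymm, evB]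

/-! ### Polynomials with all exponents of the same parity -/

/-- For `r ∈ {0, 1}`, the polynomial `H` for which `(x_1 ⋯ x_n)^r H(x_1², …, x_n²)` is the part of
`F` whose exponents are all congruent to `r` modulo 2 (see `sum_filter_mod_eq`). -/
noncomputable def halfPart {n : ℕ} {R : Type*} [CommRing R] (r : ℕ) (F : MvPolynomial (Fin n) R) :
    MvPolynomial (Fin n) R :=
  ∑ a ∈ F.support with ∀ i, a i % 2 = r, monomial (a.mapRange (· / 2) rfl) (coeff a F)

/-- The exponent vector `(r, …, r)`. -/
noncomputable def constExp (n r : ℕ) : Fin n →₀ ℕ := Finsupp.equivFunOnFinite.symm fun _ => r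

lemma two_nsmul_add_constExp {n r : ℕ} (a : Fin n →₀ ℕ) (ha : ∀ i, a i % 2 = r) :
    constExp n r + 2 • a.mapRange (· / 2) rfl = a := by
  ext i
  have := ha i
  simp [constExp]
  omega

lemma coeff_halfPart {n : ℕ} {R : Type*} [CommRing R] {r : ℕ} (hr : r < 2)
    (F : MvPolynomial (Fin n) R) (d : Fin n →₀ ℕ) :
    coeff d (halfPart r F) = coeff (constExp n r + 2 • d) F := by
  classical
  have hmod : ∀ i, (constExp n r + 2 • d) i % 2 = r := by
    intro i; simp [constExp]; omega
  have hdiv : (constExp n r + 2 • d).mapRange (· / 2) rfl = d := by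
    ext i; simp [constExp]; omega
  rw [halfPart, coeff_sum, Finset.sum_eq_single (constExp n r + 2 • d)]
  · rw [hdiv, coeff_monomial, if_pos rfl]
  · intro a ha hne
    rw [Finset.mem_filter] at ha
    rw [coeff_monomial, if_neg]
    rintro rfl
    exact hne (two_nsmul_add_constExp a ha.2).symm
  · intro h
    rw [Finset.mem_filter, not_and_or, notMem_support_iff] at h
    rw [hdiv, coeff_monomial, if_pos rfl, h.resolve_right (by simpa using hmod)]

lemma halfPart_isSymmetric {n : ℕ} {R : Type*} [CommRing R] {r : ℕ} (hr : r < 2)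
    (F : MvPolynomial (Fin n) R) (hF : F.IsSymmetric) : (halfPart r F).IsSymmetric := by
  intro e
  ext d
  obtain ⟨d, rfl⟩ := Finsupp.mapDomain_surjective e.surjective d
  have h : constExp n r + 2 • Finsupp.mapDomain e d =
      Finsupp.mapDomain e (constExp n r + 2 • d) := by
    rw [Finsupp.mapDomain_add, Finsupp.mapDomain_smul]
    congr 1
    ext i
    obtain ⟨i, rfl⟩ := e.surjective i
    rw [Finsupp.mapDomain_apply e.injective]
    simp [constExp]
  rw [coeff_rename_mapDomain _ e.injective, coeff_halfPart hr, coeff_halfPart hr, h]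
  conv_rhs => rw [← hF e]
  rw [coeff_rename_mapDomain _ e.injective]

lemma sum_filter_mod_eq {n : ℕ} {R : Type*} [CommRing R] (r : ℕ)
    (F : MvPolynomial (Fin n) R) :
    ∑ a ∈ F.support with ∀ i, a i % 2 = r, monomial a (coeff a F) =
      monomial (constExp n r) 1 * expand 2 (halfPart r F) := by
  rw [halfPart, map_sum, Finset.mul_sum]
  refine Finset.sum_congr rfl fun a ha => ?_
  rw [Finset.mem_filter] at ha
  rw [expand_monomial, monomial_mul, one_mul, two_nsmul_add_constExp a ha.2]

/-- If sign changes of the pairs `(x_k, x_j)` preserve the value of `F`, then terms of `F` whose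
exponents do not all have the same parity contribute nothing to it. -/
lemma evB_filter_parity {n : ℕ} (k : Fin n) (F : MvPolynomial (Fin n) (nbSubring n))
    (ht : ∀ j, j ≠ k → ∃ t : MvPolynomial (Fin n) GP →+* MvPolynomial (Fin n) GP,
      (∀ b ∈ nbSubring n, t b = b) ∧ t (X k) = -X k ∧ t (X j) = -X j ∧
        (∀ i, i ≠ k → i ≠ j → t (X i) = X i) ∧ t (evB n F) = evB n F) (J : Finset (Fin n)) :
    evB n (∑ a ∈ F.support with ∀ j ∈ J, a j % 2 = a k % 2, monomial a (coeff a F)) =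
      evB n F := by
  classical
  induction J using Finset.induction_on with
  | empty => simp [← F.as_sum]
  | insert j J hj ih =>
    by_cases hjk : j = k
    · simpa [hjk] using ih
    obtain ⟨t, htB, htk, htj, hti, htF⟩ := ht j hjk
    have hmon : ∀ (a : Fin n →₀ ℕ) (b : nbSubring n),
        evB n (monomial a b) + t (evB n (monomial a b)) =
          if a j % 2 = a k % 2 then 2 * evB n (monomial a b) else 0 := by
      intro a b
      have h1 : evB n (monomial a b) = (b : MvPolynomial (Fin n) GP) * ∏ i, X i ^ a i := by
        rw [evB, coe_eval₂Hom, eval₂_monomial, Finsupp.prod_fintype _ _ (by simp)]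
        rfl
      have h2 : t (∏ i, X i ^ a i) =
          (-1) ^ (a k + a j) * (∏ i, X i ^ a i : MvPolynomial (Fin n) GP) := by
        have hjm : j ∈ Finset.univ.erase k := by simp [hjk]
        have hrest : ∏ i ∈ (Finset.univ.erase k).erase j, t (X i ^ a i) =
            ∏ i ∈ (Finset.univ.erase k).erase j, X i ^ a i := by
          refine Finset.prod_congr rfl fun i hi => ?_
          simp only [Finset.mem_erase, Finset.mem_univ, and_true] at hi
          rw [map_pow, hti i hi.2 hi.1]
        rw [← Finset.mul_prod_erase _ _ (Finset.mem_univ k),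
          ← Finset.mul_prod_erase _ _ hjm, map_mul, map_mul, map_prod, map_pow, map_pow, htk, htj]
        rw [hrest, neg_pow (X k : MvPolynomial (Fin n) GP), neg_pow (X j : MvPolynomial (Fin n) GP)]
        ring
      rw [h1, map_mul, h2, htB _ b.2]
      split_ifs with h
      · rw [Even.neg_one_pow (by rw [Nat.even_iff]; omega)]; ring
      · rw [Odd.neg_one_pow (by rw [Nat.odd_iff]; omega)]; ring
    have h2 : (2 : MvPolynomial (Fin n) GP) ≠ 0 := two_ne_zero
    refine mul_left_cancel₀ h2 ?_
    have hsum : 2 * evB n (∑ a ∈ F.support with ∀ i ∈ insert j J, a i % 2 = a k % 2,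
        monomial a (coeff a F)) =
        evB n (∑ a ∈ F.support with ∀ i ∈ J, a i % 2 = a k % 2, monomial a (coeff a F)) +
        t (evB n (∑ a ∈ F.support with ∀ i ∈ J, a i % 2 = a k % 2,
          monomial a (coeff a F))) := by
      rw [map_sum, map_sum, map_sum, ← Finset.sum_add_distrib, Finset.mul_sum]
      simp only [hmon]
      rw [← Finset.sum_filter, Finset.filter_filter]
      refine Finset.sum_congr (Finset.filter_congr fun a _ => ?_) fun _ _ => rfl
      rw [Finset.forall_mem_insert, and_comm]
    rw [hsum, ih, htF, two_mul]

/-- A symmetric polynomial over `B^{(n)}` whose value is invariant under the sign changes of the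
pairs `(x_k, x_j)` has its value in `B^{(n)}`: such a value is of the form
`g_0(x_1², …, x_n²) + x_1 ⋯ x_n g_1(x_1², …, x_n²)` with `g_0`, `g_1` symmetric. -/
lemma evB_mem_of_invariant {n : ℕ} (k : Fin n) (F : MvPolynomial (Fin n) (nbSubring n))
    (hF : F.IsSymmetric)
    (ht : ∀ j, j ≠ k → ∃ t : MvPolynomial (Fin n) GP →+* MvPolynomial (Fin n) GP,
      (∀ b ∈ nbSubring n, t b = b) ∧ t (X k) = -X k ∧ t (X j) = -X j ∧
        (∀ i, i ≠ k → i ≠ j → t (X i) = X i) ∧ t (evB n F) = evB n F) :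
    evB n F ∈ nbSubring n := by
  have hn : 1 ≤ n := by have := k.2; omega
  have hpart : ∀ r, r < 2 →
      evB n (∑ a ∈ F.support with ∀ i, a i % 2 = r, monomial a (coeff a F)) ∈ nbSubring n := by
    intro r hr
    rw [sum_filter_mod_eq r, map_mul]
    refine mul_mem ?_ (evB_expand_mem n hn _ (halfPart_isSymmetric hr F hF))
    have : evB n (monomial (constExp n r) 1) = esymm (Fin n) GP n ^ r := by
      rw [evB, coe_eval₂Hom, eval₂_monomial, Finsupp.prod_fintype _ _ (by simp), map_one, one_mul,
        esymm_top_eq_prod, ← Finset.prod_pow]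
      simp [constExp]
    rw [this]
    exact pow_mem (esymm_top_mem hn) _
  rw [← evB_filter_parity k F ht Finset.univ,
    ← Finset.sum_filter_add_sum_filter_not _ (fun a => a k % 2 = 0), map_add]
  refine add_mem ?_ ?_
  · convert hpart 0 (by omega) using 2
    rw [Finset.filter_filter]
    refine Finset.sum_congr (Finset.filter_congr fun a _ => ?_) fun _ _ => rfl
    exact ⟨fun h i => by rw [h.1 i (Finset.mem_univ i), h.2],
      fun h => ⟨fun i _ => by rw [h i, h k], h k⟩⟩
  · convert hpart 1 (by omega) using 2
    rw [Finset.filter_filter]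
    refine Finset.sum_congr (Finset.filter_congr fun a _ => ?_) fun _ _ => rfl
    exact ⟨fun h i => by rw [h.1 i (Finset.mem_univ i)]; omega,
      fun h => ⟨fun i _ => by rw [h i, h k], by rw [h k]; omega⟩⟩

/-! ### The invariants -/

/-- Conjugates of `s_□` composed with a transposition are sign changes of pairs of variables. -/
lemma IsSBox.exists_signChange {n : ℕ} {k l : Fin n}
    {s : MvPolynomial (Fin n) GP →+* MvPolynomial (Fin n) GP} (h : IsSBox k l s)
    (f : MvPolynomial (Fin n) GP) (hf : f.IsSymmetric) (hsf : s f = f) (j : Fin n) (hj : j ≠ k) :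
    ∃ t : MvPolynomial (Fin n) GP →+* MvPolynomial (Fin n) GP,
      (∀ b ∈ nbSubring n, t b = b) ∧ t (X k) = -X k ∧ t (X j) = -X j ∧
        (∀ i, i ≠ k → i ≠ j → t (X i) = X i) ∧ t f = f := by
  have hkl := h.ne
  let ρ (e : Equiv.Perm (Fin n)) : MvPolynomial (Fin n) GP →+* MvPolynomial (Fin n) GP :=
    (rename e : MvPolynomial (Fin n) GP →ₐ[GP] MvPolynomial (Fin n) GP).toRingHom
  have hρX : ∀ e i, ρ e (X i) = X (e i) := fun e i => rename_X _ _
  refine ⟨(ρ (Equiv.swap l j)).comp (s.comp ((ρ (Equiv.swap k l)).comp (ρ (Equiv.swap l j)))),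
    fun b hb => ?_, ?_, ?_, fun i hik hij => ?_, ?_⟩
  · have hρ : ∀ e, ρ e b = b := fun e => rename_of_mem hb e
    simp only [RingHom.comp_apply, hρ, h.map_of_mem hb]
  · simp only [RingHom.comp_apply, hρX]
    rw [Equiv.swap_apply_of_ne_of_ne hkl hj.symm, Equiv.swap_apply_left, h.map_right, map_neg, hρX,
      Equiv.swap_apply_of_ne_of_ne hkl hj.symm]
  · simp only [RingHom.comp_apply, hρX]
    rw [Equiv.swap_apply_right, Equiv.swap_apply_right, h.map_left, map_neg, hρX,
      Equiv.swap_apply_left]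
  · simp only [RingHom.comp_apply, hρX]
    have h1 : Equiv.swap l j i ≠ k := by
      rw [Ne, Equiv.swap_apply_eq_iff, Equiv.swap_apply_of_ne_of_ne hkl hj.symm]
      exact hik
    have h2 : Equiv.swap l j i ≠ l := by
      rw [Ne, Equiv.swap_apply_eq_iff, Equiv.swap_apply_left]
      exact hij
    rw [Equiv.swap_apply_of_ne_of_ne h1 h2, h.map_other _ h1 h2, hρX, Equiv.swap_apply_self]
  · have hρ : ∀ e, ρ e f = f := fun e => hf e
    simp only [RingHom.comp_apply, hρ, hsf]

lemma mem_of_two_pow_mul_mem (n : ℕ) (hn : 1 ≤ n) (f : MvPolynomial (Fin n) GP) (N : ℕ)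
    (hf : 2 ^ N * f ∈ nbSubring n) : f ∈ nbSubring n := by
  induction N with
  | zero => simpa using hf
  | succ N ih => exact ih (mem_of_two_mul_mem n hn _ (by rwa [← mul_assoc, ← pow_succ']))

lemma IsSBox.mem_of_invariant {n : ℕ} {k l : Fin n}
    {s : MvPolynomial (Fin n) GP →+* MvPolynomial (Fin n) GP} (h : IsSBox k l s)
    (f : MvPolynomial (Fin n) GP) (hf : f.IsSymmetric) (hsf : s f = f) : f ∈ nbSubring n := by
  have hn : 1 ≤ n := by have := k.2; omega
  obtain ⟨N, F, hF, hFf⟩ := exists_two_pow_mul n hn f hf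
  refine mem_of_two_pow_mul_mem n hn f N ?_
  rw [← hFf]
  refine evB_mem_of_invariant k F hF fun j hj => ?_
  obtain ⟨t, h1, h2, h3, h4, h5⟩ := h.exists_signChange f hf hsf j hj
  refine ⟨t, h1, h2, h3, h4, ?_⟩
  rw [hFf, map_mul, map_pow, map_ofNat, h5]

/-- Adjacent transpositions generate the symmetric group. -/
lemma isSymmetric_of_adjacent {n : ℕ} {R : Type*} [CommRing R] (f : MvPolynomial (Fin n) R)
    (hf : ∀ i j : Fin n, (i : ℕ) + 1 = j → rename (Equiv.swap i j) f = f) : f.IsSymmetric := by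
  rcases n with _ | n
  · intro e
    rw [Subsingleton.elim e 1]
    exact rename_id_apply f
  intro e
  have he : e ∈ Submonoid.closure
      (Set.range fun i : Fin n => Equiv.swap i.castSucc i.succ) := by
    rw [Equiv.Perm.mclosure_swap_castSucc_succ]; trivial
  induction he using Submonoid.closure_induction with
  | mem e he =>
    obtain ⟨i, rfl⟩ := he
    exact hf _ _ (by simp)
  | one => exact rename_id_apply f
  | mul e e' _ _ h h' =>
    rw [Equiv.Perm.coe_mul, ← rename_rename, h', h]

lemma IsSBox.invariant_iff {n : ℕ} {k l : Fin n}
    {s : MvPolynomial (Fin n) GP →+* MvPolynomial (Fin n) GP} (h : IsSBox k l s)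
    (f : MvPolynomial (Fin n) GP) :
    ((∀ i j : Fin n, (i : ℕ) + 1 = j → rename (Equiv.swap i j) f = f) ∧ s f = f) ↔
      f ∈ nbSubring n :=
  ⟨fun hf => h.mem_of_invariant f (isSymmetric_of_adjacent f hf.1) hf.2,
    fun hf => ⟨fun _ _ _ => rename_of_mem hf _, h.map_of_mem hf⟩⟩

/-- For any ring endomorphism `sB` of `Γ′[x_1, …, x_n]` acting as `s_□`
on the generators (`x_1 ↦ −x_2`, `x_2 ↦ −x_1`, `x_j ↦ x_j` for `j ≥ 3`, and
`b_p ↦ b_p + (x_1 + x_2) Σ_{j=0}^{p−1} (Σ_{a+b=j} x_1^a x_2^b) c_{p−1−j}` for `p ≥ 1`),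
an element `f` is invariant under `sB` and all adjacent variable transpositions
(`s_1, …, s_{n−1}`) if and only if `f` lies in the subring generated by the `ⁿb_p`
(`p ≥ 1`) and `ⁿb′_n`. -/
theorem gammaPrimeX_invariants_eq_nb_subring (n : ℕ) (hn : 2 ≤ n)
    (sB : GammaPrimeX n →+* GammaPrimeX n)
    (hx1 : sB (X ⟨0, by omega⟩) = - X (⟨1, by omega⟩ : Fin n))
    (hx2 : sB (X ⟨1, by omega⟩) = - X (⟨0, by omega⟩ : Fin n))
    (hxj : ∀ j : Fin n, (j : ℕ) ≠ 0 → (j : ℕ) ≠ 1 → sB (X j) = X j)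
    (hb : ∀ p : ℕ, 1 ≤ p → sB (C (bq p)) =
      C (bq p) + (X (⟨0, by omega⟩ : Fin n) + X (⟨1, by omega⟩ : Fin n)) *
        ∑ j ∈ Finset.range p,
          (∑ a ∈ Finset.range (j + 1),
            (X (⟨0, by omega⟩ : Fin n)) ^ a * (X (⟨1, by omega⟩ : Fin n)) ^ (j - a)) *
          C (cOf (p - 1 - j)))
    (f : GammaPrimeX n) :
    ((∀ i j : Fin n, (i : ℕ) + 1 = (j : ℕ) →
        MvPolynomial.rename (Equiv.swap i j) f = f) ∧ sB f = f) ↔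
      f ∈ Subring.closure
        ({g : GammaPrimeX n | ∃ p : ℕ, 1 ≤ p ∧ g = nb n p} ∪ {nb' n}) := by
  -- `GP` unfolds to `GammaPrime`, and `bG`, `cG` to `bq`, `cOf`, so the hypotheses carry over.
  have hne : (⟨0, by omega⟩ : Fin n) ≠ ⟨1, by omega⟩ := by simp
  have hS : IsSBox (⟨0, by omega⟩ : Fin n) ⟨1, by omega⟩ sB :=
    ⟨hne, hx1, hx2, fun j h0 h1 => hxj j (fun h => h0 (Fin.ext h)) (fun h => h1 (Fin.ext h)), hb⟩
  have hnb : ∀ p, nb n p = nbG n p := by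
    intro p
    rw [nb, nbG]
    split_ifs
    · rfl
    · refine (Finset.sum_range_succ (M := MvPolynomial (Fin n) GP)
        (fun i => esymm (Fin n) GP i * C (bG (p - i))) p).trans ?_
      rw [Nat.sub_self, bG_zero, map_one, mul_one]
      rfl
  have hset : ({g : GammaPrimeX n | ∃ p : ℕ, 1 ≤ p ∧ g = nb n p} ∪ {nb' n}) =
      {g : MvPolynomial (Fin n) GP | ∃ p : ℕ, 1 ≤ p ∧ g = nbG n p} ∪ {nbCore n n} := by
    simp only [hnb]
    rfl
  rw [hset]
  exact hS.invariant_iff f
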